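/- Let G be a finite abelian p-group and H a proper quotient solitary subgroup of G (H ≠ G). Then H, viewed as a subgroup of the Frattini subgroup Φ(G), is quotient solitary in Φ(G). -/

import Mathlib

/-!
Every maximal subgroup of a finite abelian `p`-group `G` has index `p`, and `Φ(G) = Gᵖ`.

A proper quotient solitary `H` lies in `Φ(G)`. If a maximal subgroup `M` misses some `h ∈ H`, take
`χ : G → G ⧸ H` with kernel `M` and compare the projection `π : G → G ⧸ H` with `π · χ`. The latter
agrees with `π` on `M`, and `M H = G`, so it is onto; its kernel does not contain `h`. This
contradicts solitariness.

Now let `K ≤ Φ(G)` satisfy `Φ(G) ⧸ K ≅ Φ(G) ⧸ H`. As `Φ(G) = Gᵖ`, this says that `A = G ⧸ K` and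
`B = G ⧸ H` are groups of the same order with `Aᵖ ≅ Bᵖ`. Such an isomorphism extends to `A ≅ B`
(`nonempty_mulEquiv_of_range_pow`), so `K = H`. The extension is built on graphs: a subgroup of
`A × B` that is the graph of an isomorphism between subgroups, maximal among those extending the
given one, has full first projection. Otherwise a pair `(a, b)` with `a`, `b` outside the two
projections and `(aᵖ, bᵖ)` in the graph could be adjoined; such a pair exists because `A` and `B`
have equally many solutions of `xᵖ = 1`.
-/

/-- A normal subgroup `H` of a group `G` is *quotient solitary* if for every normal
subgroup `K` of `G`, `G/K ≅ G/H` implies `K = H`. -/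
def IsQuotientSolitary {G : Type*} [Group G] (H : Subgroup G) : Prop :=
  ∃ hH : H.Normal, ∀ (K : Subgroup G) (hK : K.Normal),
    (letI := hH; letI := hK; Nonempty ((G ⧸ K) ≃* (G ⧸ H))) → K = H

/-- A subgroup of `A × B` is the graph of an isomorphism between a subgroup of `A` and a subgroup
of `B`: it meets both factors trivially. -/
def IsPartialIso {A B : Type*} [Group A] [Group B] (Γ : Subgroup (A × B)) : Prop :=
  ∀ x ∈ Γ, x.1 = 1 ↔ x.2 = 1

/-- For prime `p`, if `a ^ c` lies in a subgroup containing `a ^ p` but not `a`, then `p ∣ c`. -/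
lemma dvd_of_zpow_mem {A : Type*} [Group A] {p : ℕ} (hp : p.Prime) {S : Subgroup A} {a : A}
    (ha : a ∉ S) (hap : a ^ p ∈ S) {c : ℤ} (hc : a ^ c ∈ S) : (p : ℤ) ∣ c := by
  by_contra hdvd
  obtain ⟨u, v, huv⟩ := (Nat.prime_iff_prime_int.mp hp).coprime_iff_not_dvd.mpr hdvd
  apply ha
  have h : a = (a ^ p) ^ u * (a ^ c) ^ v := by
    rw [← zpow_natCast, ← zpow_mul, ← zpow_mul, ← zpow_add, mul_comm (p : ℤ), mul_comm c, huv,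
      zpow_one]
  rw [h]
  exact mul_mem (zpow_mem hap u) (zpow_mem hc v)

/-- A pair `(a, b)` with `a`, `b` outside the domain and range of a partial isomorphism, but with
`(a ^ p, b ^ p)` in its graph, can be adjoined to it. -/
lemma IsPartialIso.sup_zpowers {A B : Type*} [CommGroup A] [CommGroup B] {p : ℕ} (hp : p.Prime)
    {Γ : Subgroup (A × B)} (hΓ : IsPartialIso Γ) {a : A} {b : B}
    (hab : (a, b) ^ p ∈ Γ) (ha : a ∉ Γ.map (MonoidHom.fst A B))
    (hb : b ∉ Γ.map (MonoidHom.snd A B)) : IsPartialIso (Γ ⊔ Subgroup.zpowers (a, b)) := by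
  intro z hz
  obtain ⟨x, hx, y, hy, rfl⟩ := Subgroup.mem_sup.mp hz
  obtain ⟨c, rfl⟩ := Subgroup.mem_zpowers_iff.mp hy
  have key : (p : ℤ) ∣ c → ((x * (a, b) ^ c).1 = 1 ↔ (x * (a, b) ^ c).2 = 1) := by
    rintro ⟨d, rfl⟩
    apply hΓ
    rw [zpow_mul, zpow_natCast]
    exact mul_mem hx (zpow_mem hab d)
  constructor
  · intro h
    refine (key (dvd_of_zpow_mem hp ha ⟨_, hab, rfl⟩ ?_)).mp h
    exact ⟨x⁻¹, inv_mem hx, by simpa using (eq_inv_of_mul_eq_one_right h).symm⟩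
  · intro h
    refine (key (dvd_of_zpow_mem hp hb ⟨_, hab, rfl⟩ ?_)).mpr h
    exact ⟨x⁻¹, inv_mem hx, by simpa using (eq_inv_of_mul_eq_one_right h).symm⟩

/-- A partial isomorphism whose range contains the whole `p`-torsion of `B` also has the whole
`p`-torsion of `A` in its domain, by counting. -/
lemma IsPartialIso.ker_pow_le {A B : Type*} [CommGroup A] [Finite A] [CommGroup B] {p : ℕ}
    {Γ : Subgroup (A × B)} (hΓ : IsPartialIso Γ)
    (hcard : Nat.card (powMonoidHom p : A →* A).ker = Nat.card (powMonoidHom p : B →* B).ker)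
    (hB : (powMonoidHom p : B →* B).ker ≤ Γ.map (MonoidHom.snd A B)) :
    (powMonoidHom p : A →* A).ker ≤ Γ.map (MonoidHom.fst A B) := by
  have hex : ∀ b : (powMonoidHom p : B →* B).ker, ∃ a : (powMonoidHom p : A →* A).ker,
      ((a : A), (b : B)) ∈ Γ := by
    rintro ⟨b, hb⟩
    obtain ⟨⟨a, b⟩, h, rfl⟩ := hB hb
    exact ⟨⟨a, (hΓ _ (pow_mem h p)).mpr hb⟩, h⟩
  choose f hf using hex
  have hinj : Function.Injective f := by
    intro b b' h
    have h1 := (hΓ _ (div_mem (hf b) (hf b'))).mp (by simp [h])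
    exact Subtype.ext (div_eq_one.mp h1)
  have : Finite (powMonoidHom p : B →* B).ker := Nat.finite_of_card_ne_zero <| by
    rw [← hcard]; exact Nat.card_pos.ne'
  have hsurj := (hinj.bijective_of_nat_card_le hcard.le).2
  intro a ha
  obtain ⟨b, hb⟩ := hsurj ⟨a, ha⟩
  exact ⟨_, hf b, by simp [hb]⟩

/-- For prime `p`, a finite abelian group `A` is determined up to isomorphism by its order and by
the isomorphism type of the subgroup of `p`-th powers. -/
theorem nonempty_mulEquiv_of_range_pow {A B : Type*} [CommGroup A] [Finite A] [CommGroup B]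
    [Finite B] {p : ℕ} (hp : p.Prime) (hcard : Nat.card A = Nat.card B)
    (θ : (powMonoidHom p : A →* A).range ≃* (powMonoidHom p : B →* B).range) :
    Nonempty (A ≃* B) := by
  have hker : Nat.card (powMonoidHom p : A →* A).ker = Nat.card (powMonoidHom p : B →* B).ker := by
    have hA := Subgroup.card_eq_card_quotient_mul_card_subgroup (powMonoidHom p : A →* A).ker
    have hB := Subgroup.card_eq_card_quotient_mul_card_subgroup (powMonoidHom p : B →* B).ker
    rw [Nat.card_congr (QuotientGroup.quotientKerEquivRange _).toEquiv] at hA hB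
    rw [hcard, hB, Nat.card_congr θ.toEquiv] at hA
    exact (Nat.eq_of_mul_eq_mul_left Nat.card_pos hA).symm
  set Γ₀ : Subgroup (A × B) :=
    ((Subgroup.subtype _).prod ((Subgroup.subtype _).comp θ.toMonoidHom)).range with hΓ₀
  have hpart : IsPartialIso Γ₀ := by
    rintro _ ⟨u, rfl⟩
    simp
  obtain ⟨Γ, hle, hΓ, hmax⟩ := Finite.exists_le_maximal hpart
  have hfst : Γ.map (MonoidHom.fst A B) = ⊤ := by
    by_contra hne
    obtain ⟨a, ha⟩ : ∃ a, a ∉ Γ.map (MonoidHom.fst A B) := by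
      by_contra! h
      exact hne (eq_top_iff.mpr fun a _ => h a)
    obtain ⟨b, hab⟩ : ∃ b : B, (a, b) ^ p ∈ Γ := by
      obtain ⟨b, hb⟩ := (θ ⟨a ^ p, a, rfl⟩).2
      exact ⟨b, hle ⟨⟨a ^ p, a, rfl⟩, Prod.ext rfl hb.symm⟩⟩
    obtain ⟨b', hab', hb'⟩ : ∃ b' : B, (a, b') ^ p ∈ Γ ∧ b' ∉ Γ.map (MonoidHom.snd A B) := by
      by_cases hb : b ∈ Γ.map (MonoidHom.snd A B)
      swap
      · exact ⟨b, hab, hb⟩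
      -- If `(a₁, b) ∈ Γ`, then `a / a₁` is a `p`-torsion element outside the domain, so some
      -- `p`-torsion element `b₀` is outside the range, and `b * b₀` serves.
      obtain ⟨⟨a₁, b⟩, h₁, rfl⟩ := hb
      have hA : ¬ (powMonoidHom p : A →* A).ker ≤ Γ.map (MonoidHom.fst A B) := by
        intro h
        have h2 : a / a₁ ∈ Γ.map (MonoidHom.fst A B) := by
          apply h
          have h3 := (hΓ _ (div_mem hab (pow_mem h₁ p))).mpr (by simp)
          simpa [MonoidHom.mem_ker, div_pow] using h3
        have h4 := mul_mem h2 (⟨_, h₁, rfl⟩ : a₁ ∈ Γ.map (MonoidHom.fst A B))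
        exact ha (by simpa using h4)
      have hB := mt (hΓ.ker_pow_le hker) hA
      obtain ⟨b₀, hb₀, hb₀'⟩ := SetLike.not_le_iff_exists.mp hB
      have hb₀p : b₀ ^ p = 1 := hb₀
      refine ⟨b * b₀, ?_, fun h => hb₀' ?_⟩
      · simpa [mul_pow, hb₀p] using hab
      · have h5 := mul_mem (inv_mem (⟨_, h₁, rfl⟩ : b ∈ Γ.map (MonoidHom.snd A B))) h
        simpa using h5
    have hmem : (a, b') ∈ Γ :=
      hmax (hΓ.sup_zpowers hp hab' ha hb') le_sup_left
        (Subgroup.mem_sup_right (Subgroup.mem_zpowers _))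
    exact ha ⟨_, hmem, rfl⟩
  let f : Γ →* A := (MonoidHom.fst A B).comp Γ.subtype
  let g : Γ →* B := (MonoidHom.snd A B).comp Γ.subtype
  have hf : Function.Bijective f := by
    constructor
    · refine (injective_iff_map_eq_one f).mpr fun x hx => ?_
      exact Subtype.ext (Prod.ext hx ((hΓ _ x.2).mp hx))
    · intro a
      obtain ⟨x, hx, hxa⟩ := (hfst ▸ Subgroup.mem_top a : a ∈ Γ.map (MonoidHom.fst A B))
      exact ⟨⟨x, hx⟩, hxa⟩
  have hg : Function.Injective g := by
    refine (injective_iff_map_eq_one g).mpr fun x hx => ?_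
    exact Subtype.ext (Prod.ext ((hΓ _ x.2).mpr hx) hx)
  have hg' : Function.Bijective g := by
    apply hg.bijective_of_nat_card_le
    rw [Nat.card_congr (Equiv.ofBijective f hf), hcard]
  exact ⟨(MulEquiv.ofBijective f hf).symm.trans (MulEquiv.ofBijective g hg')⟩

lemma card_quotient_of_isCoatom {G : Type*} [CommGroup G] [Finite G] {p : ℕ} (hp : p.Prime)
    (hG : IsPGroup p G) {M : Subgroup G} (hM : IsCoatom M) : Nat.card (G ⧸ M) = p := by
  have : Fact p.Prime := ⟨hp⟩
  have hsimple : IsSimpleGroup (G ⧸ M) := by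
    have : Nontrivial (G ⧸ M) := QuotientGroup.nontrivial_iff.mpr hM.1
    refine ⟨fun N _ => ?_⟩
    have hsurj := QuotientGroup.mk'_surjective M
    have hle : M ≤ N.comap (QuotientGroup.mk' M) := fun x hx => by
      simp [(QuotientGroup.eq_one_iff x).mpr hx]
    rcases hM.le_iff.mp hle with h | h
    · right
      rw [← Subgroup.map_comap_eq_self_of_surjective hsurj N, h,
        Subgroup.map_top_of_surjective _ hsurj]
    · left
      rw [← Subgroup.map_comap_eq_self_of_surjective hsurj N, h, QuotientGroup.map_mk'_self]
  have hprime := CommGroup.is_simple_iff_prime_card.mp hsimple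
  obtain ⟨n, hn⟩ := IsPGroup.iff_card.mp (hG.to_quotient M)
  exact (Nat.prime_dvd_prime_iff_eq hprime hp).mp (hprime.dvd_of_dvd_pow hn.dvd)

theorem frattini_eq_range_pow {G : Type*} [CommGroup G] [Finite G] {p : ℕ} (hp : p.Prime)
    (hG : IsPGroup p G) : frattini G = (powMonoidHom p : G →* G).range := by
  apply le_antisymm
  · intro x hx
    by_contra hxp
    -- A subgroup maximal among those containing `Gᵖ` and missing `x` is a maximal subgroup.
    obtain ⟨M, hle, hxM, hmax⟩ :=
      Finite.exists_le_maximal (p := fun S : Subgroup G => x ∉ S) hxp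
    refine hxM (frattini_le_coatom ⟨?_, ?_⟩ hx)
    · rintro rfl
      exact hxM (Subgroup.mem_top x)
    intro N hN
    have hxN : x ∈ N := by
      by_contra h
      exact hN.not_ge (hmax h hN.le)
    refine eq_top_iff.mpr fun y _ => ?_
    by_cases hy : y ∈ M
    · exact hN.le hy
    have hxy : x ∈ M ⊔ Subgroup.zpowers y := by
      by_contra h
      exact hy (hmax h le_sup_left (Subgroup.mem_sup_right (Subgroup.mem_zpowers y)))
    obtain ⟨m, hm, _, ⟨c, rfl⟩, hmc⟩ := Subgroup.mem_sup.mp hxy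
    by_contra hyN
    -- `y ^ c ∈ N` with `y ∉ N` forces `p ∣ c`, so `y ^ c ∈ Gᵖ ≤ M` and `x ∈ M`.
    obtain ⟨d, rfl⟩ : (p : ℤ) ∣ c := by
      refine dvd_of_zpow_mem hp hyN (hN.le (hle ⟨y, rfl⟩)) ?_
      have h : y ^ c = m⁻¹ * x := by rw [← hmc]; simp
      rw [h]
      exact mul_mem (inv_mem (hN.le hm)) hxN
    apply hxM
    rw [← hmc]
    refine mul_mem hm ?_
    change y ^ ((p : ℤ) * d) ∈ M
    rw [zpow_mul, zpow_natCast]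
    exact zpow_mem (hle ⟨y, rfl⟩) d
  · rintro _ ⟨y, rfl⟩
    simp only [frattini, Order.radical, Subgroup.mem_iInf]
    intro M hM
    rw [← QuotientGroup.eq_one_iff, powMonoidHom_apply, QuotientGroup.mk_pow,
      ← card_quotient_of_isCoatom hp hG hM]
    exact pow_card_eq_one'

theorem IsQuotientSolitary.le_frattini {G : Type*} [CommGroup G] [Finite G] {p : ℕ}
    (hp : p.Prime) (hG : IsPGroup p G) {H : Subgroup G} (hqs : IsQuotientSolitary H)
    (hproper : H ≠ ⊤) : H ≤ frattini G := by
  have : Fact p.Prime := ⟨hp⟩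
  obtain ⟨hH, hqs⟩ := hqs
  intro h hhH
  simp only [frattini, Order.radical, Subgroup.mem_iInf]
  intro M hM
  by_contra hhM
  have hcard := card_quotient_of_isCoatom hp hG hM
  have hnt : Nontrivial (G ⧸ H) := QuotientGroup.nontrivial_iff.mpr hproper
  obtain ⟨z, hz⟩ : ∃ z : G ⧸ H, orderOf z = p := by
    obtain ⟨n, hn, hc⟩ := (hG.to_quotient H).nontrivial_iff_card.mp hnt
    exact exists_prime_orderOf_dvd_card' p (hc ▸ dvd_pow_self p hn.ne')
  let e : G ⧸ M ≃* Subgroup.zpowers z :=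
    mulEquivOfPrimeCardEq hcard ((Nat.card_zpowers z).trans hz)
  let χ : G →* G ⧸ H :=
    (Subgroup.zpowers z).subtype.comp (e.toMonoidHom.comp (QuotientGroup.mk' M))
  have hχ : ∀ g, χ g = 1 ↔ g ∈ M := fun g => by simp [χ]
  let ψ : G →* G ⧸ H := QuotientGroup.mk' H * χ
  have hsurj : Function.Surjective ψ := by
    intro q
    obtain ⟨g, rfl⟩ := QuotientGroup.mk_surjective q
    have htop : M ⊔ H = ⊤ := hM.2 _ (lt_of_le_of_ne le_sup_left fun heq =>
      hhM (heq ▸ Subgroup.mem_sup_right hhH))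
    obtain ⟨m, hm, k, hk, rfl⟩ := Subgroup.mem_sup.mp (htop ▸ Subgroup.mem_top g : g ∈ M ⊔ H)
    exact ⟨m, by simp [ψ, (hχ m).mpr hm, (QuotientGroup.eq_one_iff k).mpr hk]⟩
  have hker : ψ.ker = H :=
    hqs ψ.ker inferInstance ⟨QuotientGroup.quotientKerEquivOfSurjective ψ hsurj⟩
  have h1 : ψ h = 1 := by rw [← MonoidHom.mem_ker, hker]; exact hhH
  apply hhM
  rw [← hχ]
  simpa [ψ, (QuotientGroup.eq_one_iff h).mpr hhH] using h1

/-- For `K ≤ Φ(G) = Gᵖ`, the quotient `Φ(G) ⧸ K` is the group of `p`-th powers of `G ⧸ K`. -/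
lemma nonempty_frattini_quotient_mulEquiv {G : Type*} [CommGroup G] [Finite G] {p : ℕ}
    (hp : p.Prime) (hG : IsPGroup p G) (K : Subgroup G) :
    Nonempty (frattini G ⧸ K.subgroupOf (frattini G) ≃*
      (powMonoidHom p : G ⧸ K →* G ⧸ K).range) := by
  let f : frattini G →* G ⧸ K := (QuotientGroup.mk' K).comp (frattini G).subtype
  have hker : K.subgroupOf (frattini G) = f.ker := by
    ext x
    simp [f, MonoidHom.mem_ker, Subgroup.mem_subgroupOf]
  have hrange : f.range = (powMonoidHom p : G ⧸ K →* G ⧸ K).range := by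
    rw [MonoidHom.range_comp, Subgroup.range_subtype, frattini_eq_range_pow hp hG]
    ext q
    constructor
    · rintro ⟨_, ⟨y, rfl⟩, rfl⟩
      exact ⟨y, rfl⟩
    · rintro ⟨q, rfl⟩
      obtain ⟨y, rfl⟩ := QuotientGroup.mk_surjective q
      exact ⟨_, ⟨y, rfl⟩, rfl⟩
  exact ⟨(QuotientGroup.quotientMulEquivOfEq hker).trans
    ((QuotientGroup.quotientKerEquivRange f).trans (MulEquiv.subgroupCongr hrange))⟩

/-- Every proper quotient solitary subgroup of a finite abelian p-group, viewed as a
subgroup of the Frattini subgroup, is quotient solitary in the Frattini subgroup. -/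
theorem isQuotientSolitary_subgroupOf_frattini {G : Type*} [CommGroup G] [Finite G]
    (p : ℕ) (hp : p.Prime) (hG : IsPGroup p G)
    (H : Subgroup G) (hqs : IsQuotientSolitary H) (hproper : H ≠ ⊤) :
    IsQuotientSolitary (H.subgroupOf (frattini G)) := by
  have hHle := hqs.le_frattini hp hG hproper
  obtain ⟨_, hqs⟩ := hqs
  refine ⟨inferInstance, fun K' hK' ⟨e⟩ => ?_⟩
  obtain ⟨K, hKle, rfl⟩ : ∃ K : Subgroup G, K ≤ frattini G ∧ K.subgroupOf (frattini G) = K' :=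
    ⟨K'.map (frattini G).subtype, Subgroup.map_subtype_le K',
      Subgroup.comap_map_eq_self_of_injective (Subgroup.subtype_injective _) K'⟩
  obtain ⟨eK⟩ := nonempty_frattini_quotient_mulEquiv hp hG K
  obtain ⟨eH⟩ := nonempty_frattini_quotient_mulEquiv hp hG H
  have hcard : Nat.card (G ⧸ K) = Nat.card (G ⧸ H) := by
    change K.index = H.index
    rw [← Subgroup.relIndex_mul_index hKle, ← Subgroup.relIndex_mul_index hHle]
    congr 1
    exact Nat.card_congr e.toEquiv
  rw [hqs K inferInstance
    (nonempty_mulEquiv_of_range_pow hp hcard (eK.symm.trans (e.trans eH)))]
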